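/- Spherical decomposition for a finite ensemble: let M ≥ 1, let θ¹,…,θᴹ ∈ Δ_K be probability vectors, and set θ̄ = (1/M) Σ_{m=1}^{M} θᵐ (so θ̄ ≠ 0). Then 1 − ‖θ̄‖₂ = (1/M) Σ_{m=1}^{M} (1 − ‖θᵐ‖₂) + (1/M) Σ_{m=1}^{M} (‖θᵐ‖₂ − ⟨θ̄, θᵐ⟩ / ‖θ̄‖₂), where ‖·‖₂ is the Euclidean norm and ⟨·,·⟩ the Euclidean inner product. -/

import Mathlib

/-- **Spherical decomposition for a finite ensemble.**
For an ensemble `θ¹,…,θᴹ ∈ Δ_K` with average `θ̄ = (1/M) Σ_m θᵐ`: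
`1 − ‖θ̄‖₂ = (1/M) Σ_m (1 − ‖θᵐ‖₂) + (1/M) Σ_m (‖θᵐ‖₂ − ⟨θ̄, θᵐ⟩ / ‖θ̄‖₂)`,
where `‖x‖₂ = √(Σ_k x_k²)` and `⟨x, y⟩ = Σ_k x_k y_k`. -/
theorem spherical_decomposition_ensemble
    (K M : ℕ) (hM : 1 ≤ M) (θ : Fin M → Fin K → ℝ)
    (h0 : ∀ m k, 0 ≤ θ m k) (h1 : ∀ m, ∑ k, θ m k = 1) :
    1 - Real.sqrt (∑ k, ((1 / (M : ℝ)) * ∑ m, θ m k) ^ 2)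
      = (1 / (M : ℝ)) * ∑ m, (1 - Real.sqrt (∑ k, (θ m k) ^ 2))
        + (1 / (M : ℝ)) * ∑ m,
            (Real.sqrt (∑ k, (θ m k) ^ 2)
              - (∑ k, ((1 / (M : ℝ)) * ∑ m', θ m' k) * θ m k)
                / Real.sqrt (∑ k, ((1 / (M : ℝ)) * ∑ m', θ m' k) ^ 2)) := by
  have hM' : (M : ℝ) ≠ 0 := by
    have : M ≠ 0 := by omega
    exact_mod_cast this
  have key : (1 / (M : ℝ)) * ∑ m, ∑ k, ((1 / (M : ℝ)) * ∑ m', θ m' k) * θ m k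
      = ∑ k, ((1 / (M : ℝ)) * ∑ m, θ m k) ^ 2 := by
    rw [Finset.sum_comm, Finset.mul_sum]
    refine Finset.sum_congr rfl fun k _ => ?_
    rw [← Finset.mul_sum]
    ring
  rw [Finset.sum_sub_distrib, Finset.sum_sub_distrib, ← Finset.sum_div, mul_sub, mul_sub,
    ← mul_div_assoc, key, Real.div_sqrt]
  simp only [Finset.sum_const, Finset.card_univ, Fintype.card_fin, nsmul_eq_mul, mul_one]
  rw [one_div_mul_cancel hM']
  ring
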